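/- Let n be a positive integer, let γ₀ = (1,2,...,n) be the forward cycle on [n], and let τ be a permutation of [n]. Then τ ∉ S_disc-nc(n) if and only if τ satisfies at least one of the following two conditions: (DNS) there exist 3 distinct elements a,b,c ∈ [n] such that γ₀|{a,b,c} = (a,b,c) and τ|{a,b,c} = (a,c,b); (DC) there exist 4 distinct elements a,b,c,d ∈ [n] such that γ₀|{a,b,c,d} = (a,b,c,d) and τ|{a,b,c,d} = (a,c)(b,d). -/

import Mathlib

/-- The permutation induced by `f` on the subset `B`: an element `b` is sent to the first
element of the sequence `f b, f (f b), f (f (f b)), ...` that lies in `B`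
(and is left fixed if no iterate ever returns to `B`). -/
noncomputable def induced {α : Type*} (f : α → α) (B : Set α) (b : α) : α := by
  classical
  exact if h : ∃ k, 0 < k ∧ f^[k] b ∈ B then f^[Nat.find h] b else b

/-- `A` is an orbit of the permutation `τ`. -/
def IsOrbit {α : Type*} (τ : Equiv.Perm α) (A : Set α) : Prop :=
  ∃ a, A = {b | τ.SameCycle a b}

/-- The number of orbits of `τ` (fixed points count as orbits). -/
noncomputable def numOrbits {α : Type*} (τ : Equiv.Perm α) : ℕ :=
  Set.ncard {A : Set α | IsOrbit τ A}

/-- `induced f S` acts on `a, b, c` as the 3-cycle `(a, b, c)`. -/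
def MapsCyc3 {α : Type*} (f : α → α) (S : Set α) (a b c : α) : Prop :=
  induced f S a = b ∧ induced f S b = c ∧ induced f S c = a

/-- `induced f S` acts on `a, b, c, d` as the 4-cycle `(a, b, c, d)`. -/
def MapsCyc4 {α : Type*} (f : α → α) (S : Set α) (a b c d : α) : Prop :=
  induced f S a = b ∧ induced f S b = c ∧ induced f S c = d ∧ induced f S d = a

/-- `induced f S` acts on `a, b, c, d` as the product of transpositions `(a, c)(b, d)`. -/
def MapsSwap2 {α : Type*} (f : α → α) (S : Set α) (a b c d : α) : Prop :=
  induced f S a = c ∧ induced f S c = a ∧ induced f S b = d ∧ induced f S d = b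

/-- `induced f S` acts on `x, y` as the transposition `(x, y)`. -/
def MapsSwap {α : Type*} (f : α → α) (S : Set α) (x y : α) : Prop :=
  induced f S x = y ∧ induced f S y = x

/-- `σ` is standard with respect to the "forward cycle" `γ₀`, i.e. `σ∣B = γ₀∣B` for
every orbit `B` of `σ`. -/
def DiscStandardRel {n : ℕ} (γ₀ σ : Equiv.Perm (Fin n)) : Prop :=
  ∀ A : Set (Fin n), IsOrbit σ A → ∀ b ∈ A, induced (⇑σ) A b = induced (⇑γ₀) A b

/-- The orbit partition of `σ` has no crossing: there are no `a < b < c < d` with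
`a, c` in one orbit and `b, d` in a different orbit. -/
def OrbitsNoCrossing {n : ℕ} (σ : Equiv.Perm (Fin n)) : Prop :=
  ¬ ∃ a b c d : Fin n, a < b ∧ b < c ∧ c < d ∧
      σ.SameCycle a c ∧ σ.SameCycle b d ∧ ¬ σ.SameCycle a b

/-- Disc non-crossing relative to a given forward cycle `γ₀`. -/
def DiscNCRel {n : ℕ} (γ₀ σ : Equiv.Perm (Fin n)) : Prop :=
  DiscStandardRel γ₀ σ ∧ OrbitsNoCrossing σ

/-- The set `S_disc-nc(n)` of disc non-crossing permutations of `[n]`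
(here `[n] = {1, …, n}` is modelled by `Fin n`, and the forward cycle
`γ₀ = (1, 2, …, n)` is `finRotate n`). -/
def DiscNC {n : ℕ} (σ : Equiv.Perm (Fin n)) : Prop :=
  DiscNCRel (finRotate n) σ

/-- The external points `{1, …, p}` (0-indexed: values `< p`). -/
def extSet (p q : ℕ) : Set (Fin (p + q)) := {i | (i : ℕ) < p}

/-- The internal points `{p+1, …, p+q}` (0-indexed: values `≥ p`). -/
def intSet (p q : ℕ) : Set (Fin (p + q)) := {i | p ≤ (i : ℕ)}

/-- `γ_ext = (1, 2, …, p)`, the forward cycle on the external points. -/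
def gammaExt (p q : ℕ) : Equiv.Perm (Fin (p + q)) :=
  ((List.finRange (p + q)).take p).formPerm

/-- `γ_int = (p+1, p+2, …, p+q)`, the forward cycle on the internal points. -/
def gammaInt (p q : ℕ) : Equiv.Perm (Fin (p + q)) :=
  ((List.finRange (p + q)).drop p).formPerm

/-- `γ = γ_ext · γ_int`. -/
def gammaAnn (p q : ℕ) : Equiv.Perm (Fin (p + q)) := gammaExt p q * gammaInt p q

/-- `λ_{x,y}`: the permutation fixing `x` and `y` and cycling the remaining points as
`(γ_ext(x), γ_ext²(x), …, γ_ext^{p-1}(x), γ_int(y), γ_int²(y), …, γ_int^{q-1}(y))`. -/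
def lamPerm (p q : ℕ) (x y : Fin (p + q)) : Equiv.Perm (Fin (p + q)) :=
  (((List.range (p - 1)).map fun k => (gammaExt p q ^ (k + 1)) x) ++
    ((List.range (q - 1)).map fun k => (gammaInt p q ^ (k + 1)) y)).formPerm

/-- `τ` is standard in `(p,q)`-annular sense. -/
def AnnStandard (p q : ℕ) (τ : Equiv.Perm (Fin (p + q))) : Prop :=
  (∀ A : Set (Fin (p + q)), IsOrbit τ A →
    (∀ b ∈ A ∩ extSet p q,
        induced (⇑τ) (A ∩ extSet p q) b = induced (⇑(gammaExt p q)) (A ∩ extSet p q) b) ∧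
    (∀ b ∈ A ∩ intSet p q,
        induced (⇑τ) (A ∩ intSet p q) b = induced (⇑(gammaInt p q)) (A ∩ intSet p q) b)) ∧
  (∀ A : Set (Fin (p + q)), IsOrbit τ A →
    (A ∩ extSet p q).Nonempty → (A ∩ intSet p q).Nonempty →
    (∃! a, a ∈ A ∩ extSet p q ∧ τ a ∈ intSet p q) ∧
    (∃! a, a ∈ A ∩ intSet p q ∧ τ a ∈ extSet p q))

/-- The annular crossing pattern (AC-1). -/
def AC1 (p q : ℕ) (τ : Equiv.Perm (Fin (p + q))) : Prop :=
  ∃ a b c d : Fin (p + q), List.Pairwise (· ≠ ·) [a, b, c, d] ∧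
    MapsCyc4 (⇑(gammaAnn p q)) {a, b, c, d} a b c d ∧
    MapsSwap2 (⇑τ) {a, b, c, d} a b c d

/-- The annular crossing pattern (AC-2). -/
def AC2 (p q : ℕ) (τ : Equiv.Perm (Fin (p + q))) : Prop :=
  ∃ a b c x y : Fin (p + q), List.Pairwise (· ≠ ·) [a, b, c, x, y] ∧
    x ∈ extSet p q ∧ y ∈ intSet p q ∧
    MapsCyc3 (⇑(lamPerm p q x y)) {a, b, c} a b c ∧
    MapsCyc3 (⇑τ) {a, b, c, x, y} a c b ∧
    MapsSwap (⇑τ) {a, b, c, x, y} x y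

/-- The annular crossing pattern (AC-3). -/
def AC3 (p q : ℕ) (τ : Equiv.Perm (Fin (p + q))) : Prop :=
  ∃ a b c d x y : Fin (p + q), List.Pairwise (· ≠ ·) [a, b, c, d, x, y] ∧
    x ∈ extSet p q ∧ y ∈ intSet p q ∧
    MapsCyc4 (⇑(lamPerm p q x y)) {a, b, c, d} a b c d ∧
    MapsSwap2 (⇑τ) {a, b, c, d, x, y} a b c d ∧
    MapsSwap (⇑τ) {a, b, c, d, x, y} x y

/-- The set `S_ann-nc(p,q)` of `(p,q)`-annular non-crossing permutations. -/
def AnnNC (p q : ℕ) (τ : Equiv.Perm (Fin (p + q))) : Prop :=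
  AnnStandard p q τ ∧ ¬ AC1 p q τ ∧ ¬ AC2 p q τ ∧ ¬ AC3 p q τ

/-- A `(p,q)`-connecting set: meets both the external and internal points. -/
def ConnectingBlock (p q : ℕ) (B : Set (Fin (p + q))) : Prop :=
  (B ∩ extSet p q).Nonempty ∧ (B ∩ intSet p q).Nonempty

/-- `τ` is `(p,q)`-connected: it has a `(p,q)`-connecting orbit. -/
def AnnConnected (p q : ℕ) (τ : Equiv.Perm (Fin (p + q))) : Prop :=
  ∃ A : Set (Fin (p + q)), IsOrbit τ A ∧ ConnectingBlock p q A

/-- A family of blocks has no crossing: no `a < b < c < d` with `a, c` in one block and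
`b, d` in a different block. -/
def NoCrossing {n : ℕ} (ρ : Set (Set (Fin n))) : Prop :=
  ¬ ∃ (a b c d : Fin n) (B C : Set (Fin n)), B ∈ ρ ∧ C ∈ ρ ∧ B ≠ C ∧
      a < b ∧ b < c ∧ c < d ∧ a ∈ B ∧ c ∈ B ∧ b ∈ C ∧ d ∈ C

/-- Condition (DNS): there are 3 distinct elements `a, b, c` with
`γ₀∣{a,b,c} = (a,b,c)` and `τ∣{a,b,c} = (a,c,b)`. -/
def DNS {n : ℕ} (τ : Equiv.Perm (Fin n)) : Prop :=
  ∃ a b c : Fin n, List.Pairwise (· ≠ ·) [a, b, c] ∧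
    MapsCyc3 (⇑(finRotate n)) {a, b, c} a b c ∧ MapsCyc3 (⇑τ) {a, b, c} a c b

/-- Condition (DC): there are 4 distinct elements `a, b, c, d` with
`γ₀∣{a,b,c,d} = (a,b,c,d)` and `τ∣{a,b,c,d} = (a,c)(b,d)`. -/
def DC {n : ℕ} (τ : Equiv.Perm (Fin n)) : Prop :=
  ∃ a b c d : Fin n, List.Pairwise (· ≠ ·) [a, b, c, d] ∧
    MapsCyc4 (⇑(finRotate n)) {a, b, c, d} a b c d ∧
    MapsSwap2 (⇑τ) {a, b, c, d} a b c d

/-!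
Everything rests on transitivity of induction: for `B ⊆ A`, inducing on `A` and then on `B` is
inducing on `B`. If `τ` agrees with `γ₀` on each orbit, it therefore agrees with `γ₀` on each set of
points of a single orbit, which rules out (DNS), and also (DC) with `a, b` in one orbit. Conversely,
if `x = τ|A(a)` and `y = γ₀|A(a)` differ for an orbit `A`, then restricting to `{a, y, x}` exhibits
(DNS), because a cycle on three points is determined by a single value. Finally, `γ₀|S(a) = b` says
that no point of `S` lies strictly between `a` and `b` in the circular order, so that (DC) with `a`
and `b` in different orbits is exactly a crossing, up to rotating `(a, b, c, d)`.
-/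

section Induced

variable {α : Type*} {f g : α → α} {A B : Set α} {b : α} {i k : ℕ}

/-- The orbit of `b` under `f` first returns to `B` at the positive time `k`: the relation behind
`induced`, used to reason about it without `Nat.find`. -/
structure IsFirstReturn (f : α → α) (B : Set α) (b : α) (k : ℕ) : Prop where
  pos : 0 < k
  mem : f^[k] b ∈ B
  notMem : ∀ j, 0 < j → j < k → f^[j] b ∉ B

theorem exists_isFirstReturn (h : ∃ k, 0 < k ∧ f^[k] b ∈ B) : ∃ k, IsFirstReturn f B b k := by
  classical
  exact ⟨Nat.find h, (Nat.find_spec h).1, (Nat.find_spec h).2,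
    fun j hj hjk hmem ↦ Nat.find_min h hjk ⟨hj, hmem⟩⟩

theorem IsFirstReturn.induced_eq (h : IsFirstReturn f B b k) : induced f B b = f^[k] b := by
  classical
  have hex : ∃ k, 0 < k ∧ f^[k] b ∈ B := ⟨k, h.pos, h.mem⟩
  have hfind : Nat.find hex = k :=
    (Nat.find_eq_iff hex).2 ⟨⟨h.pos, h.mem⟩, fun j hjk hj ↦ h.notMem j hj.1 hjk hj.2⟩
  simp only [induced, dif_pos hex, hfind]

theorem isFirstReturn_one (h : f b ∈ B) : IsFirstReturn f B b 1 :=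
  ⟨one_pos, h, fun _ _ _ ↦ by omega⟩

theorem IsFirstReturn.succ (h : IsFirstReturn f B (f b) k) (hb : f b ∉ B) :
    IsFirstReturn f B b (k + 1) where
  pos := k.succ_pos
  mem := h.mem
  notMem
    | 1, _, _ => hb
    | j + 2, _, hj => h.notMem (j + 1) j.succ_pos (by omega)

theorem IsFirstReturn.iterate (h : IsFirstReturn f B b k) (hik : i < k) :
    IsFirstReturn f B (f^[i] b) (k - i) where
  pos := by omega
  mem := by rw [← Function.iterate_add_apply, Nat.sub_add_cancel hik.le]; exact h.mem
  notMem j _ _ := by rw [← Function.iterate_add_apply]; exact h.notMem _ (by omega) (by omega)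

theorem induced_eq_apply (h : f b ∈ B) : induced f B b = f b :=
  (isFirstReturn_one h).induced_eq

theorem exists_induced_eq_iterate (f : α → α) (B : Set α) (b : α) :
    ∃ k, induced f B b = f^[k] b := by
  by_cases h : ∃ k, 0 < k ∧ f^[k] b ∈ B
  · obtain ⟨k, hk⟩ := exists_isFirstReturn h
    exact ⟨k, hk.induced_eq⟩
  · exact ⟨0, dif_neg h⟩

theorem mapsTo_induced (f : α → α) (B : Set α) : Set.MapsTo (induced f B) B B := by
  intro b hb
  by_cases h : ∃ k, 0 < k ∧ f^[k] b ∈ B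
  · obtain ⟨k, hk⟩ := exists_isFirstReturn h
    exact hk.induced_eq ▸ hk.mem
  · rwa [induced, dif_neg h]

theorem induced_congr (hfg : Set.EqOn f g A) (hf : Set.MapsTo f A A) (hb : b ∈ A) :
    induced f B b = induced g B b := by
  have iterate_eq (k : ℕ) : f^[k] b = g^[k] b := by
    induction k with
    | zero => rfl
    | succ k ih =>
      rw [Function.iterate_succ_apply', Function.iterate_succ_apply', ← ih, hfg (hf.iterate k hb)]
  by_cases h : ∃ k, 0 < k ∧ f^[k] b ∈ B
  · obtain ⟨k, hk⟩ := exists_isFirstReturn h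
    have hkg : IsFirstReturn g B b k := by
      exact ⟨hk.pos, iterate_eq k ▸ hk.mem, fun j ↦ iterate_eq j ▸ hk.notMem j⟩
    rw [hk.induced_eq, hkg.induced_eq, iterate_eq]
  · rw [induced, induced, dif_neg h, dif_neg (by simpa only [iterate_eq] using h)]

theorem IsFirstReturn.exists_induced (hk : IsFirstReturn f B b k) (hBA : B ⊆ A) :
    ∃ m, IsFirstReturn (induced f A) B b m ∧ (induced f A)^[m] b = f^[k] b := by
  induction k using Nat.strong_induction_on generalizing b with
  | _ k ih =>
    obtain ⟨i, hi⟩ := exists_isFirstReturn ⟨k, hk.pos, hBA hk.mem⟩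
    have hik : i ≤ k := not_lt.1 fun hki ↦ hi.notMem k hk.pos hki (hBA hk.mem)
    rcases hik.eq_or_lt with rfl | hik
    · exact ⟨1, isFirstReturn_one (hi.induced_eq ▸ hk.mem), hi.induced_eq⟩
    · obtain ⟨m, hm, hmk⟩ := ih (k - i) (Nat.sub_lt hk.pos hi.pos) (hk.iterate hik)
      rw [← Function.iterate_add_apply, Nat.sub_add_cancel hik.le] at hmk
      rw [← hi.induced_eq] at hm hmk
      exact ⟨m + 1, hm.succ (hi.induced_eq ▸ hk.notMem i hi.pos hik), hmk⟩

theorem IsFirstReturn.induced_induced (hk : IsFirstReturn f B b k) (hBA : B ⊆ A) :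
    induced (induced f A) B b = induced f B b := by
  obtain ⟨m, hm, hmk⟩ := hk.exists_induced hBA
  rw [hm.induced_eq, hmk, hk.induced_eq]

end Induced

section Perm

open Equiv.Perm

variable {α : Type*} {f : Equiv.Perm α} {A B : Set α} {a b c d : α}

theorem IsOrbit.sameCycle (hA : IsOrbit f A) (ha : a ∈ A) (hb : b ∈ A) : f.SameCycle a b := by
  obtain ⟨o, rfl⟩ := hA
  exact SameCycle.trans (SameCycle.symm ha) hb

theorem sameCycle_induced (f : Equiv.Perm α) (B : Set α) (b : α) :
    f.SameCycle b (induced f B b) := by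
  obtain ⟨k, hk⟩ := exists_induced_eq_iterate f B b
  rw [hk, iterate_eq_pow]
  exact (SameCycle.refl f b).pow_right

variable [Finite α]

theorem exists_isFirstReturn_of_sameCycle (h : f.SameCycle b c) (hc : c ∈ B) :
    ∃ k, IsFirstReturn f B b k := by
  obtain ⟨k, hk, -, hkc⟩ := h.exists_pow_eq''
  exact exists_isFirstReturn ⟨k, hk, by rwa [iterate_eq_pow, hkc]⟩

theorem induced_induced (hBA : B ⊆ A) (hb : b ∈ B) :
    induced (induced f A) B b = induced f B b :=
  have ⟨_, hk⟩ := exists_isFirstReturn_of_sameCycle (.refl f b) hb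
  hk.induced_induced hBA

-- A first return to `b` itself would happen at a period of `b`, so the orbit would miss `c`.
theorem induced_ne_self (h : f.SameCycle b c) (hc : c ∈ B) (hbc : b ≠ c) : induced f B b ≠ b := by
  intro hself
  obtain ⟨k, hk⟩ := exists_isFirstReturn_of_sameCycle h hc
  have hperiod : Function.IsPeriodicPt f k b := hk.induced_eq.symm.trans hself
  obtain ⟨i, hi⟩ := h.exists_nat_pow_eq
  have hmod : f^[i % k] b = c := (hperiod.iterate_mod_apply i).trans hi
  rcases (i % k).eq_zero_or_pos with hzero | hpos
  · exact hbc (by rwa [hzero] at hmod)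
  · exact hk.notMem _ hpos (i.mod_lt hk.pos) (hmod ▸ hc)

theorem leftInvOn_induced_inv (f : Equiv.Perm α) (B : Set α) :
    Set.LeftInvOn (induced ⇑f⁻¹ B) (induced f B) B := by
  intro b hb
  obtain ⟨k, hk⟩ := exists_isFirstReturn_of_sameCycle (.refl f b) hb
  have hback {j : ℕ} (hj : j ≤ k) : (⇑f⁻¹)^[j] (f^[k] b) = f^[k - j] b := by
    obtain ⟨l, rfl⟩ := Nat.exists_eq_add_of_le hj
    rw [Function.iterate_add_apply, Nat.add_sub_cancel_left]
    exact Function.LeftInverse.iterate f.left_inv j _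
  have hback_self : (⇑f⁻¹)^[k] (f^[k] b) = b := by simpa using hback le_rfl
  have hreturn : IsFirstReturn (⇑f⁻¹) B (f^[k] b) k :=
    ⟨hk.pos, hback_self.symm ▸ hb,
      fun j _ hjk ↦ hback hjk.le ▸ hk.notMem _ (by omega) (by omega)⟩
  rw [hk.induced_eq, hreturn.induced_eq, hback_self]

theorem induced_eq_of_sameCycle (hb : b ∈ B) (hc : c ∈ B) (hbc : b ≠ c) (h : f.SameCycle b c)
    (hB : ∀ x ∈ B, f.SameCycle b x → x = b ∨ x = c) : induced f B b = c :=
  (hB _ (mapsTo_induced f B hb) (sameCycle_induced f B b)).resolve_left (induced_ne_self h hc hbc)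

theorem mapsCyc3_of_induced_eq (hac : a ≠ c) (hbc : b ≠ c) (h : f.SameCycle a c)
    (hab : induced f {a, b, c} a = b) : MapsCyc3 f {a, b, c} a b c := by
  have ha : a ∈ ({a, b, c} : Set α) := by simp
  have hb : b ∈ ({a, b, c} : Set α) := by simp
  have hc : c ∈ ({a, b, c} : Set α) := by simp
  have hsab : f.SameCycle a b := hab ▸ sameCycle_induced f {a, b, c} a
  have hinj := (leftInvOn_induced_inv f {a, b, c}).injOn
  have hca : induced f {a, b, c} c = a := by
    rcases mapsTo_induced f _ hc with hca | hcb | hcc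
    · exact hca
    · exact absurd (hinj ha hc (hab.trans hcb.symm)) hac
    · exact absurd hcc (induced_ne_self h.symm ha hac.symm)
  refine ⟨hab, ?_, hca⟩
  rcases mapsTo_induced f _ hb with hba | hbb | hbc'
  · exact absurd (hinj hb hc (hba.trans hca.symm)) hbc
  · exact absurd hbb (induced_ne_self (hsab.symm.trans h) hc hbc)
  · exact hbc'

theorem mapsSwap2_of_not_sameCycle (hac : a ≠ c) (hbd : b ≠ d) (hsac : f.SameCycle a c)
    (hsbd : f.SameCycle b d) (hsab : ¬ f.SameCycle a b) : MapsSwap2 f {a, b, c, d} a b c d := by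
  have hsad : ¬ f.SameCycle a d := fun h ↦ hsab (h.trans hsbd.symm)
  have hscb : ¬ f.SameCycle c b := fun h ↦ hsab (hsac.trans h)
  have hscd : ¬ f.SameCycle c d := fun h ↦ hsad (hsac.trans h)
  have hsba := mt SameCycle.symm hsab
  have hsda := mt SameCycle.symm hsad
  have hsbc := mt SameCycle.symm hscb
  have hsdc := mt SameCycle.symm hscd
  exact ⟨induced_eq_of_sameCycle (by simp) (by simp) hac hsac (by simp [*]),
    induced_eq_of_sameCycle (by simp) (by simp) hac.symm hsac.symm (by simp [*]),
    induced_eq_of_sameCycle (by simp) (by simp) hbd hsbd (by simp [*]),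
    induced_eq_of_sameCycle (by simp) (by simp) hbd.symm hsbd.symm (by simp [*])⟩

end Perm

section Standard

variable {n : ℕ} {γ σ : Equiv.Perm (Fin n)} {B : Set (Fin n)} {a b c d : Fin n}

theorem DiscStandardRel.induced_eq (h : DiscStandardRel γ σ) (ha : a ∈ B)
    (hB : ∀ x ∈ B, σ.SameCycle a x) : induced σ B a = induced γ B a := by
  have haA : a ∈ {x | σ.SameCycle a x} := .refl σ a
  calc induced σ B a
    _ = induced (induced σ {x | σ.SameCycle a x}) B a := (induced_induced hB ha).symm
    _ = induced (induced γ {x | σ.SameCycle a x}) B a :=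
      induced_congr (h _ ⟨a, rfl⟩) (mapsTo_induced _ _) haA
    _ = induced γ B a := induced_induced hB ha

theorem DiscStandardRel.not_mapsCyc3 (h : DiscStandardRel γ σ) (hbc : b ≠ c)
    (hγ : MapsCyc3 γ {a, b, c} a b c) : ¬ MapsCyc3 σ {a, b, c} a c b := by
  rintro ⟨hac, hcb, -⟩
  have hsac : σ.SameCycle a c := hac ▸ sameCycle_induced σ {a, b, c} a
  have hscb : σ.SameCycle c b := hcb ▸ sameCycle_induced σ {a, b, c} c
  have heq : induced σ {a, b, c} a = induced γ {a, b, c} a :=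
    h.induced_eq (by simp) (by simp [hsac, hsac.trans hscb, Equiv.Perm.SameCycle.refl])
  exact hbc (hγ.1.symm.trans (heq.symm.trans hac))

theorem exists_mapsCyc3_of_not_discStandardRel (hγ : ∀ x y, γ.SameCycle x y)
    (h : ¬ DiscStandardRel γ σ) :
    ∃ a b c : Fin n, List.Pairwise (· ≠ ·) [a, b, c] ∧
      MapsCyc3 γ {a, b, c} a b c ∧ MapsCyc3 σ {a, b, c} a c b := by
  simp only [DiscStandardRel, not_forall] at h
  obtain ⟨A, hA, a, ha, hne⟩ := h
  obtain ⟨x, hx⟩ : ∃ x, induced σ A a = x := ⟨_, rfl⟩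
  obtain ⟨y, hy⟩ : ∃ y, induced γ A a = y := ⟨_, rfl⟩
  have hxA : x ∈ A := hx ▸ mapsTo_induced σ A ha
  have hyA : y ∈ A := hy ▸ mapsTo_induced γ A ha
  have hyx : y ≠ x := by rwa [← hx, ← hy, ne_comm]
  have hax : a ≠ x := by
    rintro rfl
    exact induced_ne_self (hA.sameCycle ha hyA) hyA hyx.symm hx
  have hay : a ≠ y := by
    rintro rfl
    exact induced_ne_self (hγ a x) hxA hyx hy
  have hsub : {a, y, x} ⊆ A := by simp [Set.insert_subset_iff, ha, hxA, hyA]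
  have restrict {f : Equiv.Perm (Fin n)} {z : Fin n} (hz : induced f A a = z)
      (hmem : z ∈ ({a, y, x} : Set (Fin n))) : induced f {a, y, x} a = z := by
    rw [← induced_induced hsub (by simp), induced_eq_apply (hz ▸ hmem), hz]
  have hγy := restrict hy (by simp)
  have hσx := restrict hx (by simp)
  refine ⟨a, y, x, by simp [hay, hax, hyx], mapsCyc3_of_induced_eq hax hyx (hγ a x) hγy, ?_⟩
  rw [Set.pair_comm y x] at hσx ⊢
  exact mapsCyc3_of_induced_eq hay hyx.symm (hA.sameCycle ha hyA) hσx

theorem DiscStandardRel.not_sameCycle_of_mapsSwap2 (h : DiscStandardRel γ σ) (hbc : b ≠ c)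
    (hγ : MapsCyc4 γ {a, b, c, d} a b c d) (hσ : MapsSwap2 σ {a, b, c, d} a b c d) :
    ¬ σ.SameCycle a b := by
  intro hsab
  have hsac : σ.SameCycle a c := hσ.1 ▸ sameCycle_induced σ {a, b, c, d} a
  have hsbd : σ.SameCycle b d := hσ.2.2.1 ▸ sameCycle_induced σ {a, b, c, d} b
  have heq : induced σ {a, b, c, d} a = induced γ {a, b, c, d} a :=
    h.induced_eq (by simp) (by simp [hsab, hsac, hsab.trans hsbd, Equiv.Perm.SameCycle.refl])
  exact hbc (hγ.1.symm.trans (heq.symm.trans hσ.1))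

end Standard

section Rotation

variable {n : ℕ} {S : Set (Fin n)} {a b c d : Fin n} {τ : Equiv.Perm (Fin n)}

theorem finRotate_iterate_sub {j : ℕ} (a : Fin n) (hj : j < n) :
    (finRotate n)^[j] a - a = ⟨j, hj⟩ := by
  have : NeZero n := a.neZero
  rw [← finCycle_eq_finRotate_iterate (k := ⟨j, hj⟩), finCycle_apply, add_sub_cancel_left]

theorem finRotate_iterate_val_sub (a b : Fin n) : (finRotate n)^[(b - a : Fin n)] a = b := by
  have : NeZero n := a.neZero
  rw [← finCycle_eq_finRotate_iterate, finCycle_apply, add_sub_cancel]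

theorem sameCycle_finRotate (a b : Fin n) : (finRotate n).SameCycle a b := by
  rw [← finRotate_iterate_val_sub a b, Equiv.Perm.iterate_eq_pow]
  exact (Equiv.Perm.SameCycle.refl _ a).pow_right

theorem sbtw_iff_sub_lt_sub :
    sbtw a b c ↔ 0 < (b - a : Fin n).val ∧ b - a < c - a := by
  have hsub (x : Fin n) : (x - a : Fin n).val = if a ≤ x then x.val - a else n + x - a := by
    split_ifs with h
    · exact Fin.sub_val_of_le h
    · exact Fin.coe_sub_iff_lt.2 (not_le.1 h)
  simp only [Fin.sbtw_iff, Fin.lt_def, hsub, Fin.le_def]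
  grind

theorem induced_finRotate_eq_iff (hb : b ∈ S) (hab : a ≠ b) :
    induced (finRotate n) S a = b ↔ ∀ s ∈ S, ¬ sbtw a s b := by
  have : NeZero n := a.neZero
  constructor
  · intro h s hs hasb
    obtain ⟨hsa, hsb⟩ := sbtw_iff_sub_lt_sub.1 hasb
    obtain ⟨k, hk⟩ := exists_isFirstReturn_of_sameCycle (sameCycle_finRotate a b) hb
    have hks : k ≤ (s - a : Fin n) := not_lt.1 fun hlt ↦
      hk.notMem _ hsa hlt (by rwa [finRotate_iterate_val_sub])
    have hkb : b - a = ⟨k, hks.trans_lt (s - a).isLt⟩ := by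
      rw [← finRotate_iterate_sub, ← hk.induced_eq, h]
    exact hsb.not_ge (hkb ▸ hks)
  · intro h
    have hreturn : IsFirstReturn (finRotate n) S a (b - a : Fin n) :=
      { pos := Fin.pos_iff_ne_zero.2 (sub_ne_zero.2 hab.symm)
        mem := by rwa [finRotate_iterate_val_sub]
        notMem j hj hjb hmem := by
          refine h _ hmem (sbtw_iff_sub_lt_sub.2 ?_)
          rw [finRotate_iterate_sub a (hjb.trans (b - a).isLt)]
          exact ⟨hj, hjb⟩ }
    rw [hreturn.induced_eq, finRotate_iterate_val_sub]

theorem mapsCyc4_finRotate_iff (h : List.Pairwise (· ≠ ·) [a, b, c, d]) :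
    MapsCyc4 (finRotate n) {a, b, c, d} a b c d ↔ sbtw a b c ∧ sbtw c d a := by
  obtain ⟨⟨hab, hac, had⟩, ⟨hbc, hbd⟩, hcd⟩ :
      (a ≠ b ∧ a ≠ c ∧ a ≠ d) ∧ (b ≠ c ∧ b ≠ d) ∧ c ≠ d := by simpa using h
  rw [MapsCyc4, induced_finRotate_eq_iff (by simp) hab, induced_finRotate_eq_iff (by simp) hbc,
    induced_finRotate_eq_iff (by simp) hcd, induced_finRotate_eq_iff (by simp) had.symm]
  simp only [Set.forall_mem_insert, Set.mem_singleton_iff, forall_eq, Fin.sbtw_iff]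
  grind

theorem not_orbitsNoCrossing_iff_sbtw :
    ¬ OrbitsNoCrossing τ ↔ ∃ a b c d : Fin n, sbtw a b c ∧ sbtw c d a ∧
      τ.SameCycle a c ∧ τ.SameCycle b d ∧ ¬ τ.SameCycle a b := by
  rw [OrbitsNoCrossing, not_not]
  constructor
  · rintro ⟨a, b, c, d, hab, hbc, hcd, h⟩
    exact ⟨a, b, c, d, .inl ⟨hab, hbc⟩, .inr (.inr ⟨hab.trans hbc, hcd⟩), h⟩
  · rintro ⟨a, b, c, d, habc, hcda, hac, hbd, hab⟩
    have hbc : ¬ τ.SameCycle b c := fun h ↦ hab (hac.trans h.symm)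
    have hcd : ¬ τ.SameCycle c d := fun h ↦ hbc (hbd.trans h.symm)
    have hda : ¬ τ.SameCycle d a := fun h ↦ hab (hbd.trans h).symm
    have hrotation : (a < b ∧ b < c ∧ c < d) ∨ (b < c ∧ c < d ∧ d < a) ∨
        (c < d ∧ d < a ∧ a < b) ∨ (d < a ∧ a < b ∧ b < c) := by
      rw [Fin.sbtw_iff] at habc hcda
      omega
    rcases hrotation with ⟨h₁, h₂, h₃⟩ | ⟨h₁, h₂, h₃⟩ | ⟨h₁, h₂, h₃⟩ | ⟨h₁, h₂, h₃⟩
    · exact ⟨a, b, c, d, h₁, h₂, h₃, hac, hbd, hab⟩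
    · exact ⟨b, c, d, a, h₁, h₂, h₃, hbd, hac.symm, hbc⟩
    · exact ⟨c, d, a, b, h₁, h₂, h₃, hac.symm, hbd.symm, hcd⟩
    · exact ⟨d, a, b, c, h₁, h₂, h₃, hbd.symm, hac, hda⟩

theorem dns_iff : DNS τ ↔ ¬ DiscStandardRel (finRotate n) τ := by
  refine ⟨?_, exists_mapsCyc3_of_not_discStandardRel sameCycle_finRotate⟩
  rintro ⟨a, b, c, hne, hγ, hτ⟩ hstd
  exact hstd.not_mapsCyc3 (by simpa using hne.tail) hγ hτ

theorem DiscStandardRel.dc_iff (hstd : DiscStandardRel (finRotate n) τ) :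
    DC τ ↔ ¬ OrbitsNoCrossing τ := by
  rw [not_orbitsNoCrossing_iff_sbtw]
  constructor
  · rintro ⟨a, b, c, d, hne, hγ, hτ⟩
    obtain ⟨habc, hcda⟩ := (mapsCyc4_finRotate_iff hne).1 hγ
    have hac : τ.SameCycle a c := hτ.1 ▸ sameCycle_induced τ {a, b, c, d} a
    have hbd : τ.SameCycle b d := hτ.2.2.1 ▸ sameCycle_induced τ {a, b, c, d} b
    exact ⟨a, b, c, d, habc, hcda, hac, hbd,
      hstd.not_sameCycle_of_mapsSwap2 (by simp_all) hγ hτ⟩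
  · rintro ⟨a, b, c, d, habc, hcda, hac, hbd, hab⟩
    have hne : List.Pairwise (· ≠ ·) [a, b, c, d] := by
      rw [Fin.sbtw_iff] at habc hcda
      simp only [ne_eq, List.pairwise_cons, List.mem_cons, List.not_mem_nil, or_false,
        forall_eq_or_imp, forall_eq, IsEmpty.forall_iff, implies_true, List.Pairwise.nil, and_true]
      omega
    exact ⟨a, b, c, d, hne, (mapsCyc4_finRotate_iff hne).2 ⟨habc, hcda⟩,
      mapsSwap2_of_not_sameCycle (by simp_all) (by simp_all) hac hbd hab⟩

end Rotation

/-- Proposition 2.8: `τ ∉ S_disc-nc(n)` iff `τ` satisfies (DNS) or (DC). -/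
theorem stmt_1 (n : ℕ) (hn : 0 < n) (τ : Equiv.Perm (Fin n)) :
    ¬ DiscNC τ ↔ DNS τ ∨ DC τ := by
  rw [DiscNC, DiscNCRel, dns_iff]
  by_cases hstd : DiscStandardRel (finRotate n) τ
  · simp only [hstd, hstd.dc_iff, true_and, not_true, false_or]
  · simp only [hstd, false_and, not_false_iff, true_or]
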